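/- Let C ⊆ F_2^q be a linear code in which every codeword has Hamming weight congruent to 0 or 3 modulo 4. Then for any two codewords c, c', c·c' = 0 if and only if c or c' has even weight. -/

import Mathlib

open Matrix

/-- In a binary linear code where every codeword has weight ≡ 0 or 3
(mod 4), two codewords satisfy `c·c' = 0` iff `c` or `c'` has even weight. -/
theorem stmt_10 (q : ℕ) (C : Submodule (ZMod 2) (Fin q → ZMod 2))
    (hwt : ∀ c ∈ C, (Finset.univ.filter (fun i => c i = 1)).card % 4 = 0
                  ∨ (Finset.univ.filter (fun i => c i = 1)).card % 4 = 3) :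
    ∀ c ∈ C, ∀ c' ∈ C,
      (c ⬝ᵥ c' = 0 ↔ Even (Finset.univ.filter (fun i => c i = 1)).card
                    ∨ Even (Finset.univ.filter (fun i => c' i = 1)).card) := by
  intro c hc c' hc'
  have hpt : ∀ x y : ZMod 2, (if x + y = 1 then 1 else 0) + 2 * (if x = 1 ∧ y = 1 then 1 else 0)
      = (if x = 1 then 1 else 0) + (if y = 1 then 1 else 0 : ℕ) := by decide
  have hmul : ∀ x y : ZMod 2, x * y = ((if x = 1 ∧ y = 1 then 1 else 0 : ℕ) : ZMod 2) := by decide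
  have hsum : (Finset.univ.filter (fun i => (c + c') i = 1)).card
      + 2 * (Finset.univ.filter (fun i => c i = 1 ∧ c' i = 1)).card
      = (Finset.univ.filter (fun i => c i = 1)).card
        + (Finset.univ.filter (fun i => c' i = 1)).card := by
    simp only [Finset.card_filter, Finset.mul_sum, ← Finset.sum_add_distrib, Pi.add_apply]
    exact Finset.sum_congr rfl fun i _ => hpt _ _
  have hdot : c ⬝ᵥ c' = ((Finset.univ.filter (fun i => c i = 1 ∧ c' i = 1)).card : ZMod 2) := by
    rw [Finset.card_filter, Nat.cast_sum]
    exact Finset.sum_congr rfl fun i _ => hmul _ _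
  have h1 := hwt c hc
  have h2 := hwt c' hc'
  have h3 := hwt (c + c') (C.add_mem hc hc')
  rw [hdot, ZMod.natCast_eq_zero_iff, Nat.even_iff, Nat.even_iff]
  omega
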